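/- There exists an absolute constant C > 0 with the following property. Let Φ ∈ ℝ^{m×n} have restricted isometry constant δ := δ_{2K} ∈ (0,1) of order 2K, let x ∈ ℝ^n be K-sparse with support T, |T| = K ≥ 1, whose nonzero elements all have equal magnitude, and let y = Φx + v with v ≠ 0. If SNR ≥ δ^{−3/2}, then every run of K iterations of OMP applied to (Φ, y) recovers the support of x with error rate ρ_error := |T^K \ T| / K ≤ C·δ^{1/2}. -/

import Mathlib

noncomputable section
open Finset

/-- `Vec n` is `ℝ^n` with the Euclidean (ℓ²) norm. -/
abbrev Vec (n : ℕ) := EuclideanSpace ℝ (Fin n)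

/-- The standard inner product `⟨u, v⟩ = ∑ i, u i * v i`. -/
def dot {n : ℕ} (u v : Vec n) : ℝ := ∑ i, u i * v i

/-- The `j`-th column of a matrix, as a Euclidean vector. -/
def col {m n : ℕ} (Φ : Matrix (Fin m) (Fin n) ℝ) (j : Fin n) : Vec m :=
  WithLp.toLp 2 fun i => Φ i j

/-- Matrix-vector multiplication `Φ x`, valued in Euclidean space. -/
def mulVec' {m n : ℕ} (Φ : Matrix (Fin m) (Fin n) ℝ) (x : Vec n) : Vec m :=
  WithLp.toLp 2 fun i => ∑ j, Φ i j * x j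

/-- The support of a vector, as a `Finset`. -/
def suppF {n : ℕ} (x : Vec n) : Finset (Fin n) :=
  Finset.univ.filter fun i => x i ≠ 0

/-- Restriction of a vector to an index set (zero outside the set). -/
def restrict {n : ℕ} (x : Vec n) (S : Finset (Fin n)) : Vec n :=
  WithLp.toLp 2 fun i => if i ∈ S then x i else 0

/-- `RIPConst Φ L δ` : δ is the restricted isometry constant of `Φ` of order `L`,
i.e. the smallest `c ≥ 0` such that `(1-c)‖u‖² ≤ ‖Φu‖² ≤ (1+c)‖u‖²` for all
`L`-sparse `u`. -/
def RIPConst {m n : ℕ} (Φ : Matrix (Fin m) (Fin n) ℝ) (L : ℕ) (δ : ℝ) : Prop :=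
  IsLeast {c : ℝ | 0 ≤ c ∧ ∀ u : Vec n, (suppF u).card ≤ L →
    (1 - c) * ‖u‖ ^ 2 ≤ ‖mulVec' Φ u‖ ^ 2 ∧ ‖mulVec' Φ u‖ ^ 2 ≤ (1 + c) * ‖u‖ ^ 2} δ

/-- Signal-to-noise ratio `‖Φx‖²/‖v‖²`. -/
def SNR {m n : ℕ} (Φ : Matrix (Fin m) (Fin n) ℝ) (x : Vec n) (v : Vec m) : ℝ :=
  ‖mulVec' Φ x‖ ^ 2 / ‖v‖ ^ 2

/-- A run of `N` iterations of Orthogonal Matching Pursuit on data `(Φ, y)`: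
`idx (k+1) = t^{k+1}` is the index selected at iteration `k+1`, `sets k = T^k`,
`est k = x^k` and `res k = r^k`. -/
structure OMPRun {m n : ℕ} (Φ : Matrix (Fin m) (Fin n) ℝ) (y : Vec m) (N : ℕ) where
  idx : ℕ → Fin n
  sets : ℕ → Finset (Fin n)
  est : ℕ → Vec n
  res : ℕ → Vec m
  sets_zero : sets 0 = ∅
  est_zero : est 0 = 0
  res_zero : res 0 = y
  idx_not_mem : ∀ k < N, idx (k + 1) ∉ sets k
  idx_max : ∀ k < N, ∀ i : Fin n, i ∉ sets k →
    |dot (col Φ i) (res k)| ≤ |dot (col Φ (idx (k + 1))) (res k)|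
  sets_succ : ∀ k < N, sets (k + 1) = insert (idx (k + 1)) (sets k)
  est_supp : ∀ k < N, suppF (est (k + 1)) ⊆ sets (k + 1)
  est_min : ∀ k < N, ∀ u : Vec n, suppF u ⊆ sets (k + 1) →
    ‖y - mulVec' Φ (est (k + 1))‖ ≤ ‖y - mulVec' Φ u‖
  res_succ : ∀ k < N, res (k + 1) = y - mulVec' Φ (est (k + 1))

/-- The vector `Φᵀ w` restricted to an index set `A` (the vector of correlations
`⟨φ_i, w⟩` for `i ∈ A`, zero outside `A`), as a Euclidean vector. -/
def colDots {m n : ℕ} (Φ : Matrix (Fin m) (Fin n) ℝ) (A : Finset (Fin n)) (w : Vec m) : Vec n :=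
  WithLp.toLp 2 fun i => if i ∈ A then dot (col Φ i) w else 0

/-- The vector `Φᵀ w` of all column correlations, as a plain function (so `‖·‖`
is the sup/ℓ∞ norm). -/
def dualVec {m n : ℕ} (Φ : Matrix (Fin m) (Fin n) ℝ) (w : Vec m) : Fin n → ℝ :=
  fun i => dot (col Φ i) w

/-- `P⊥_S w` : the projection of `w` onto the orthogonal complement of the span
of the columns of `Φ` indexed by `S`. -/
def perpProj {m n : ℕ} (Φ : Matrix (Fin m) (Fin n) ℝ) (S : Finset (Fin n)) (w : Vec m) : Vec m :=
  w - (Submodule.orthogonalProjectionOnto (Submodule.span ℝ (col Φ '' (S : Set (Fin n)))) w : Vec m)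

/-- The `j`-th largest value (1-indexed) among `{|x i| : i ∈ Γ}` (with
multiplicities); `0` if `j > |Γ|` or `j = 0`. -/
def kthLargest {n : ℕ} (x : Vec n) (Γ : Finset (Fin n)) (j : ℕ) : ℝ :=
  if 1 ≤ j ∧ j ≤ Γ.card then
    (Multiset.sort (Γ.val.map fun i => |x i|) (· ≤ ·)).getD (Γ.card - j) 0
  else 0

/-!
Let `E k` be the norm of the part of `x` outside `T^k`, and let `a` be the smallest magnitude of a
nonzero entry of `x`. As long as `‖v‖ ≤ ε E k`, the restricted isometry property gives
`⟨Φ (x - x^k), r^k⟩ ≥ (1 - 2δ - ε) (E k)²`. The residual is orthogonal to the selected columns, so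
this inner product is at most `|⟨φ_{t^{k+1}}, r^k⟩|` times the `ℓ¹` norm of the missing part of `x`,
which is at most `(E k)² / a`. Hence the selected column has correlation at least `(1 - 2δ - ε) a`
with the residual, and the iteration lowers the residual energy by at least `(1 - 5δ - 2ε) a²`.

The initial energy is at most `(1 + δ + ε)² ‖x‖²`. When all magnitudes equal `a` one has
`‖x‖² = K a²`, so `K` iterations leave only `O(δ + ε) ‖x‖²`. As the final energy is at least
`(1 - δ - ε)² (E K)²`, this gives `(E K)² = O(δ + ε) ‖x‖²`. With `s = √δ`, either
`(E K)² < s ‖x‖²` already, or the bound on the noise makes `ε = 5s/4` admissible.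
-/

section InnerProductSpace

variable {E : Type*} [NormedAddCommGroup E] [InnerProductSpace ℝ E]

lemma norm_sub_inner_div_smul_sq_le {p : E} {B : ℝ} (hp : ‖p‖ ^ 2 ≤ B) (r : E) :
    ‖r - (inner ℝ p r / B) • p‖ ^ 2 ≤ ‖r‖ ^ 2 - inner ℝ p r ^ 2 / B := by
  set c : ℝ := inner ℝ p r / B with hc
  have hcB : c ^ 2 * B = inner ℝ p r ^ 2 / B := by
    rcases eq_or_ne B 0 with rfl | hB
    · simp
    · rw [hc]; field_simp
  calc ‖r - c • p‖ ^ 2 = ‖r‖ ^ 2 - 2 * (inner ℝ p r ^ 2 / B) + c ^ 2 * ‖p‖ ^ 2 := by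
        rw [norm_sub_sq_real, inner_smul_right, real_inner_comm, norm_smul, mul_pow,
          Real.norm_eq_abs, sq_abs, hc]
        ring
    _ ≤ ‖r‖ ^ 2 - 2 * (inner ℝ p r ^ 2 / B) + c ^ 2 * B := by gcongr
    _ = ‖r‖ ^ 2 - inner ℝ p r ^ 2 / B := by rw [hcB]; ring

lemma real_inner_eq_zero_of_forall_norm_le_norm_sub_smul {p r : E}
    (h : ∀ c : ℝ, ‖r‖ ≤ ‖r - c • p‖) : inner ℝ p r = 0 := by
  rcases eq_or_ne p 0 with rfl | hp
  · exact inner_zero_left r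
  have hp' : 0 < ‖p‖ ^ 2 := by positivity
  have hsq : ‖r‖ ^ 2 ≤ ‖r‖ ^ 2 - inner ℝ p r ^ 2 / ‖p‖ ^ 2 :=
    (pow_le_pow_left₀ (norm_nonneg r) (h _) 2).trans (norm_sub_inner_div_smul_sq_le le_rfl r)
  have hle : inner ℝ p r ^ 2 / ‖p‖ ^ 2 ≤ 0 := by linarith
  rw [div_le_iff₀ hp', zero_mul] at hle
  exact pow_eq_zero_iff two_ne_zero |>.1 (le_antisymm hle (sq_nonneg _))

lemma norm_mul_norm_sub_norm_le_real_inner_self_add (u v : E) :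
    ‖u‖ * (‖u‖ - ‖v‖) ≤ inner ℝ u (u + v) := by
  rw [inner_add_right, real_inner_self_eq_norm_sq]
  linarith [neg_le_of_abs_le (abs_real_inner_le_norm u v)]

end InnerProductSpace

section Vec

variable {n : ℕ} {x : Vec n} {a : ℝ}

lemma dot_eq_inner (u w : Vec n) : dot u w = inner ℝ u w := by
  simp [dot, PiLp.inner_apply, mul_comm]

lemma mem_suppF {i : Fin n} : i ∈ suppF x ↔ x i ≠ 0 := by
  simp [suppF]

lemma suppF_subset_iff {A : Finset (Fin n)} : suppF x ⊆ A ↔ ∀ i ∉ A, x i = 0 := by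
  simp only [Finset.subset_iff, mem_suppF, not_imp_comm]

lemma norm_restrict_sq (x : Vec n) (A : Finset (Fin n)) :
    ‖restrict x A‖ ^ 2 = ∑ i ∈ A, x i ^ 2 := by
  simp [EuclideanSpace.real_norm_sq_eq, _root_.restrict]

lemma norm_restrict_mono (x : Vec n) {A B : Finset (Fin n)} (hAB : A ⊆ B) :
    ‖restrict x A‖ ≤ ‖restrict x B‖ := by
  refine pow_le_pow_iff_left₀ (norm_nonneg _) (norm_nonneg _) two_ne_zero |>.1 ?_
  rw [norm_restrict_sq, norm_restrict_sq]
  exact sum_le_sum_of_subset_of_nonneg hAB fun _ _ _ ↦ sq_nonneg _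

lemma norm_restrict_le_of_eqOn {u : Vec n} {A : Finset (Fin n)} (h : ∀ i ∈ A, u i = x i) :
    ‖restrict x A‖ ≤ ‖u‖ := by
  refine pow_le_pow_iff_left₀ (norm_nonneg _) (norm_nonneg _) two_ne_zero |>.1 ?_
  calc ‖restrict x A‖ ^ 2 = ∑ i ∈ A, u i ^ 2 := by
        rw [norm_restrict_sq]
        exact sum_congr rfl fun i hi ↦ by rw [h i hi]
    _ ≤ ∑ i, u i ^ 2 := sum_le_univ_sum_of_nonneg fun _ ↦ sq_nonneg _
    _ = ‖u‖ ^ 2 := (EuclideanSpace.real_norm_sq_eq u).symm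

lemma norm_restrict_le_norm (x : Vec n) (A : Finset (Fin n)) : ‖restrict x A‖ ≤ ‖x‖ :=
  norm_restrict_le_of_eqOn fun _ _ ↦ rfl

lemma mul_sum_abs_le_norm_restrict_sq (hx : ∀ i ∈ suppF x, a ≤ |x i|) (A : Finset (Fin n)) :
    a * ∑ i ∈ A, |x i| ≤ ‖restrict x A‖ ^ 2 := by
  rw [norm_restrict_sq, mul_sum]
  refine sum_le_sum fun i _ ↦ ?_
  by_cases hi : x i = 0
  · simp [hi]
  · rw [← sq_abs, sq]
    exact mul_le_mul_of_nonneg_right (hx i (mem_suppF.2 hi)) (abs_nonneg _)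

lemma sum_sq_eq_of_abs_eq (hx : ∀ i ∈ suppF x, |x i| = a) (A : Finset (Fin n)) :
    ∑ i ∈ A, x i ^ 2 = a ^ 2 * #(suppF x ∩ A) := by
  calc ∑ i ∈ A, x i ^ 2 = ∑ i ∈ A, if i ∈ suppF x then a ^ 2 else 0 := by
        refine sum_congr rfl fun i _ ↦ ?_
        split_ifs with hi
        · rw [← hx i hi, sq_abs]
        · rw [mem_suppF, not_not] at hi
          simp [hi]
    _ = a ^ 2 * #(suppF x ∩ A) := by
        rw [sum_ite_mem, sum_const, nsmul_eq_mul, mul_comm, inter_comm]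

lemma norm_sq_eq_of_abs_eq (hx : ∀ i ∈ suppF x, |x i| = a) : ‖x‖ ^ 2 = a ^ 2 * #(suppF x) := by
  rw [EuclideanSpace.real_norm_sq_eq, sum_sq_eq_of_abs_eq hx, inter_univ]

lemma norm_restrict_compl_sq_eq_of_abs_eq (hx : ∀ i ∈ suppF x, |x i| = a) (A : Finset (Fin n)) :
    ‖restrict x Aᶜ‖ ^ 2 = a ^ 2 * #(suppF x \ A) := by
  rw [norm_restrict_sq, sum_sq_eq_of_abs_eq hx, sdiff_eq_inter_compl]

end Vec

section mulVec'

variable {m n : ℕ} (Φ : Matrix (Fin m) (Fin n) ℝ)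

lemma mulVec'_eq_sum (u : Vec n) : mulVec' Φ u = ∑ j, u j • col Φ j := by
  ext i
  simp [mulVec', col, mul_comm]

lemma mulVec'_zero : mulVec' Φ 0 = 0 := by
  simp [mulVec'_eq_sum]

lemma mulVec'_add (u w : Vec n) : mulVec' Φ (u + w) = mulVec' Φ u + mulVec' Φ w := by
  simp [mulVec'_eq_sum, add_smul, sum_add_distrib]

lemma mulVec'_sub (u w : Vec n) : mulVec' Φ (u - w) = mulVec' Φ u - mulVec' Φ w := by
  simp [mulVec'_eq_sum, sub_smul]

lemma mulVec'_single (j : Fin n) (c : ℝ) :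
    mulVec' Φ (EuclideanSpace.single j c) = c • col Φ j := by
  simp [mulVec'_eq_sum]

lemma inner_mulVec' (u : Vec n) (r : Vec m) :
    inner ℝ (mulVec' Φ u) r = ∑ j, u j * inner ℝ (col Φ j) r := by
  simp [mulVec'_eq_sum, sum_inner, inner_smul_left]

end mulVec'

/-- `Φ` satisfies the restricted isometry property of order `L` with constant `δ`. Unlike in
`RIPConst`, `δ` need not be the smallest such constant. -/
def HasRIP {m n : ℕ} (Φ : Matrix (Fin m) (Fin n) ℝ) (L : ℕ) (δ : ℝ) : Prop :=
  0 ≤ δ ∧ ∀ u : Vec n, #(suppF u) ≤ L →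
    (1 - δ) * ‖u‖ ^ 2 ≤ ‖mulVec' Φ u‖ ^ 2 ∧ ‖mulVec' Φ u‖ ^ 2 ≤ (1 + δ) * ‖u‖ ^ 2

namespace HasRIP

variable {m n L : ℕ} {Φ : Matrix (Fin m) (Fin n) ℝ} {δ : ℝ} {u : Vec n}

lemma norm_col_sq_le (hΦ : HasRIP Φ L δ) (hL : 1 ≤ L) (j : Fin n) : ‖col Φ j‖ ^ 2 ≤ 1 + δ := by
  have hsub : suppF (EuclideanSpace.single j (1 : ℝ)) ⊆ {j} :=
    suppF_subset_iff.2 fun i hi ↦ by simpa using hi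
  have h := (hΦ.2 _ ((card_le_card hsub).trans hL)).2
  simpa [mulVec'_single] using h

lemma mul_norm_le_norm_mulVec' (hΦ : HasRIP Φ L δ) (hu : #(suppF u) ≤ L) :
    (1 - δ) * ‖u‖ ≤ ‖mulVec' Φ u‖ := by
  rcases le_total δ 1 with hδ | hδ
  · refine pow_le_pow_iff_left₀ (mul_nonneg (sub_nonneg.2 hδ) (norm_nonneg u)) (norm_nonneg _)
      two_ne_zero |>.1 ?_
    calc ((1 - δ) * ‖u‖) ^ 2 = (1 - δ) ^ 2 * ‖u‖ ^ 2 := mul_pow _ _ _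
      _ ≤ (1 - δ) * ‖u‖ ^ 2 := by gcongr; nlinarith [hΦ.1]
      _ ≤ ‖mulVec' Φ u‖ ^ 2 := (hΦ.2 u hu).1
  · exact (mul_nonpos_of_nonpos_of_nonneg (sub_nonpos.2 hδ) (norm_nonneg u)).trans (norm_nonneg _)

lemma norm_mulVec'_le (hΦ : HasRIP Φ L δ) (hu : #(suppF u) ≤ L) :
    ‖mulVec' Φ u‖ ≤ (1 + δ) * ‖u‖ := by
  have hδ : 0 ≤ δ := hΦ.1
  refine pow_le_pow_iff_left₀ (norm_nonneg _) (by positivity) two_ne_zero |>.1 ?_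
  calc ‖mulVec' Φ u‖ ^ 2 ≤ (1 + δ) * ‖u‖ ^ 2 := (hΦ.2 u hu).2
    _ ≤ (1 + δ) ^ 2 * ‖u‖ ^ 2 := by gcongr; nlinarith
    _ = ((1 + δ) * ‖u‖) ^ 2 := (mul_pow _ _ _).symm

end HasRIP

namespace OMPRun

section Basic

variable {m n N k l : ℕ} {Φ : Matrix (Fin m) (Fin n) ℝ} {y : Vec m} (run : OMPRun Φ y N)

lemma res_eq (hk : k ≤ N) : run.res k = y - mulVec' Φ (run.est k) := by
  cases k with
  | zero => rw [run.res_zero, run.est_zero, mulVec'_zero, sub_zero]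
  | succ k => exact run.res_succ k hk

lemma suppF_est_subset (hk : k ≤ N) : suppF (run.est k) ⊆ run.sets k := by
  cases k with
  | zero => simp [run.est_zero, suppF]
  | succ k => exact run.est_supp k hk

lemma est_apply_eq_zero (hk : k ≤ N) {i : Fin n} (hi : i ∉ run.sets k) : run.est k i = 0 :=
  suppF_subset_iff.1 (run.suppF_est_subset hk) i hi

lemma norm_res_le (hk : k ≤ N) {u : Vec n} (hu : suppF u ⊆ run.sets k) :
    ‖run.res k‖ ≤ ‖y - mulVec' Φ u‖ := by
  cases k with
  | zero =>
    have hu0 : u = 0 := by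
      ext i
      exact suppF_subset_iff.1 hu i (by simp [run.sets_zero])
    rw [run.res_zero, hu0, mulVec'_zero, sub_zero]
  | succ k =>
    rw [run.res_succ k hk]
    exact run.est_min k hk u hu

lemma card_sets (hk : k ≤ N) : #(run.sets k) = k := by
  induction k with
  | zero => simp [run.sets_zero]
  | succ k ih =>
    rw [run.sets_succ k hk, card_insert_of_notMem (run.idx_not_mem k hk), ih (by omega)]

lemma sets_subset_sets (hkl : k ≤ l) (hl : l ≤ N) : run.sets k ⊆ run.sets l := by
  induction l, hkl using Nat.le_induction with
  | base => exact Subset.rfl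
  | succ l _ ih =>
    rw [run.sets_succ l hl]
    exact (ih (by omega)).trans (subset_insert _ _)

lemma norm_restrict_compl_antitone (hkl : k ≤ l) (hl : l ≤ N) (x : Vec n) :
    ‖restrict x (run.sets l)ᶜ‖ ≤ ‖restrict x (run.sets k)ᶜ‖ :=
  norm_restrict_mono x (compl_subset_compl.2 (run.sets_subset_sets hkl hl))

lemma norm_res_le_norm_res_sub_smul_col (hkl : k ≤ l) (hl : l ≤ N) {i : Fin n}
    (hi : i ∈ run.sets l) (c : ℝ) : ‖run.res l‖ ≤ ‖run.res k - c • col Φ i‖ := by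
  have hsub : suppF (run.est k + EuclideanSpace.single i c) ⊆ run.sets l := by
    refine suppF_subset_iff.2 fun j hj ↦ ?_
    have hji : j ≠ i := fun h ↦ hj (h ▸ hi)
    have hjk : j ∉ run.sets k := fun h ↦ hj (run.sets_subset_sets hkl hl h)
    simp [run.est_apply_eq_zero (hkl.trans hl) hjk, hji]
  have h := run.norm_res_le hl hsub
  rwa [mulVec'_add, mulVec'_single, ← sub_sub, ← run.res_eq (hkl.trans hl)] at h

lemma inner_col_res_eq_zero (hk : k ≤ N) {i : Fin n} (hi : i ∈ run.sets k) :
    inner ℝ (col Φ i) (run.res k) = 0 :=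
  real_inner_eq_zero_of_forall_norm_le_norm_sub_smul
    (run.norm_res_le_norm_res_sub_smul_col le_rfl hk hi)

lemma norm_res_succ_sq_le (hk : k < N) {B : ℝ} (hB : ∀ j, ‖col Φ j‖ ^ 2 ≤ B) :
    ‖run.res (k + 1)‖ ^ 2 ≤
      ‖run.res k‖ ^ 2 - inner ℝ (col Φ (run.idx (k + 1))) (run.res k) ^ 2 / B := by
  have hmem : run.idx (k + 1) ∈ run.sets (k + 1) := by
    rw [run.sets_succ k hk]
    exact mem_insert_self _ _
  calc ‖run.res (k + 1)‖ ^ 2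
      ≤ ‖run.res k - (inner ℝ (col Φ (run.idx (k + 1))) (run.res k) / B) •
          col Φ (run.idx (k + 1))‖ ^ 2 := by
        gcongr
        exact run.norm_res_le_norm_res_sub_smul_col k.le_succ hk hmem _
    _ ≤ _ := norm_sub_inner_div_smul_sq_le (hB _) _

lemma norm_res_sq_le_sub_mul {d : ℝ}
    (hd : ∀ k < N, ‖run.res (k + 1)‖ ^ 2 ≤ ‖run.res k‖ ^ 2 - d) (hk : k ≤ N) :
    ‖run.res k‖ ^ 2 ≤ ‖y‖ ^ 2 - k * d := by
  induction k with
  | zero => simp [run.res_zero]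
  | succ k ih =>
    push_cast
    linarith [ih (by omega), hd k hk]

lemma suppF_sub_est_subset (hk : k ≤ N) (x : Vec n) :
    suppF (x - run.est k) ⊆ suppF x ∪ run.sets k := by
  refine suppF_subset_iff.2 fun i hi ↦ ?_
  rw [mem_union, not_or, mem_suppF, not_not] at hi
  simp [hi.1, run.est_apply_eq_zero hk hi.2]

lemma card_suppF_sub_est_le (hk : k ≤ N) (x : Vec n) :
    #(suppF (x - run.est k)) ≤ #(suppF x) + k :=
  calc #(suppF (x - run.est k)) ≤ #(suppF x ∪ run.sets k) :=
        card_le_card (run.suppF_sub_est_subset hk x)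
    _ ≤ #(suppF x) + #(run.sets k) := card_union_le _ _
    _ = #(suppF x) + k := by rw [run.card_sets hk]

lemma norm_restrict_compl_le_norm_sub_est (hk : k ≤ N) (x : Vec n) :
    ‖restrict x (run.sets k)ᶜ‖ ≤ ‖x - run.est k‖ :=
  norm_restrict_le_of_eqOn fun i hi ↦ by
    simp [run.est_apply_eq_zero hk (mem_compl.1 hi)]

lemma mul_norm_restrict_compl_le_norm_mulVec' {L : ℕ} {δ : ℝ} {x : Vec n} (hΦ : HasRIP Φ L δ)
    (hL : #(suppF x) + k ≤ L) (hδ : δ ≤ 1) (hk : k ≤ N) :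
    (1 - δ) * ‖restrict x (run.sets k)ᶜ‖ ≤ ‖mulVec' Φ (x - run.est k)‖ :=
  calc (1 - δ) * ‖restrict x (run.sets k)ᶜ‖ ≤ (1 - δ) * ‖x - run.est k‖ :=
        mul_le_mul_of_nonneg_left (run.norm_restrict_compl_le_norm_sub_est hk x)
          (sub_nonneg.2 hδ)
    _ ≤ ‖mulVec' Φ (x - run.est k)‖ :=
        hΦ.mul_norm_le_norm_mulVec' ((run.card_suppF_sub_est_le hk x).trans hL)

lemma inner_mulVec'_sub_est_res_le (hk : k < N) (x : Vec n) :
    inner ℝ (mulVec' Φ (x - run.est k)) (run.res k) ≤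
      (∑ i ∈ (run.sets k)ᶜ, |x i|) * |inner ℝ (col Φ (run.idx (k + 1))) (run.res k)| := by
  calc inner ℝ (mulVec' Φ (x - run.est k)) (run.res k)
      = ∑ i, (x - run.est k) i * inner ℝ (col Φ i) (run.res k) := inner_mulVec' Φ _ _
    _ = ∑ i ∈ (run.sets k)ᶜ, (x - run.est k) i * inner ℝ (col Φ i) (run.res k) := by
        refine (sum_subset (subset_univ _) fun i _ hi ↦ ?_).symm
        rw [run.inner_col_res_eq_zero hk.le (by simpa using hi), mul_zero]
    _ ≤ ∑ i ∈ (run.sets k)ᶜ, |x i| * |inner ℝ (col Φ (run.idx (k + 1))) (run.res k)| := by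
        refine sum_le_sum fun i hi ↦ (le_abs_self _).trans ?_
        have hi : i ∉ run.sets k := mem_compl.1 hi
        have hmax := run.idx_max k hk i hi
        rw [dot_eq_inner, dot_eq_inner] at hmax
        rw [abs_mul, PiLp.sub_apply, run.est_apply_eq_zero hk.le hi, sub_zero]
        gcongr
    _ = _ := (sum_mul _ _ _).symm

end Basic

section Recovery

variable {m n N L k : ℕ} {Φ : Matrix (Fin m) (Fin n) ℝ} {x : Vec n} {v : Vec m} {δ ε a : ℝ}
  (run : OMPRun Φ (mulVec' Φ x + v) N)

lemma res_eq_mulVec'_sub_add (hk : k ≤ N) : run.res k = mulVec' Φ (x - run.est k) + v := by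
  rw [run.res_eq hk, mulVec'_sub, sub_add_eq_add_sub]

lemma mul_norm_restrict_compl_le_norm_res (hΦ : HasRIP Φ L δ) (hL : #(suppF x) + k ≤ L)
    (hδ : δ ≤ 1) (hk : k ≤ N) (hv : ‖v‖ ≤ ε * ‖restrict x (run.sets k)ᶜ‖) :
    (1 - δ - ε) * ‖restrict x (run.sets k)ᶜ‖ ≤ ‖run.res k‖ := by
  have htri : ‖mulVec' Φ (x - run.est k)‖ ≤ ‖run.res k‖ + ‖v‖ := by
    rw [run.res_eq_mulVec'_sub_add hk]
    exact norm_le_add_norm_add _ _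
  linarith [run.mul_norm_restrict_compl_le_norm_mulVec' hΦ hL hδ hk]

lemma mul_norm_restrict_compl_sq_le_inner (hΦ : HasRIP Φ L δ) (hL : #(suppF x) + k ≤ L)
    (hε : 0 ≤ ε) (hδε : δ + ε ≤ 1) (hk : k ≤ N)
    (hv : ‖v‖ ≤ ε * ‖restrict x (run.sets k)ᶜ‖) :
    (1 - 2 * δ - ε) * ‖restrict x (run.sets k)ᶜ‖ ^ 2 ≤
      inner ℝ (mulVec' Φ (x - run.est k)) (run.res k) := by
  have hδ : 0 ≤ δ := hΦ.1
  set E := ‖restrict x (run.sets k)ᶜ‖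
  set P := ‖mulVec' Φ (x - run.est k)‖
  have hE : 0 ≤ E := norm_nonneg _
  have hP : (1 - δ) * E ≤ P :=
    run.mul_norm_restrict_compl_le_norm_mulVec' hΦ hL (by linarith) hk
  have hPv : (1 - δ - ε) * E ≤ P - ‖v‖ := by linarith
  calc (1 - 2 * δ - ε) * E ^ 2 ≤ (1 - δ) * (1 - δ - ε) * E ^ 2 := by
        gcongr
        nlinarith [mul_nonneg hδ hε]
    _ = (1 - δ) * E * ((1 - δ - ε) * E) := by ring
    _ ≤ P * (P - ‖v‖) :=
        mul_le_mul hP hPv (mul_nonneg (by linarith) hE) (norm_nonneg _)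
    _ ≤ inner ℝ (mulVec' Φ (x - run.est k)) (run.res k) := by
        rw [run.res_eq_mulVec'_sub_add hk]
        exact norm_mul_norm_sub_norm_le_real_inner_self_add _ _

lemma mul_le_abs_inner_col_idx_res (hΦ : HasRIP Φ L δ) (hL : #(suppF x) + k ≤ L)
    (hε : 0 ≤ ε) (hδε : δ + ε ≤ 1) (ha : 0 ≤ a) (hx : ∀ i ∈ suppF x, a ≤ |x i|) (hk : k < N)
    (hne : restrict x (run.sets k)ᶜ ≠ 0) (hv : ‖v‖ ≤ ε * ‖restrict x (run.sets k)ᶜ‖) :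
    (1 - 2 * δ - ε) * a ≤ |inner ℝ (col Φ (run.idx (k + 1))) (run.res k)| := by
  set E := ‖restrict x (run.sets k)ᶜ‖
  set D := |inner ℝ (col Φ (run.idx (k + 1))) (run.res k)|
  have hE2 : 0 < E ^ 2 := by positivity
  refine le_of_mul_le_mul_right ?_ hE2
  calc (1 - 2 * δ - ε) * a * E ^ 2 = a * ((1 - 2 * δ - ε) * E ^ 2) := by ring
    _ ≤ a * ((∑ i ∈ (run.sets k)ᶜ, |x i|) * D) := by
        refine mul_le_mul_of_nonneg_left ?_ ha
        exact (run.mul_norm_restrict_compl_sq_le_inner hΦ hL hε hδε hk.le hv).trans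
          (run.inner_mulVec'_sub_est_res_le hk x)
    _ = (a * ∑ i ∈ (run.sets k)ᶜ, |x i|) * D := (mul_assoc _ _ _).symm
    _ ≤ E ^ 2 * D := by
        gcongr
        exact mul_sum_abs_le_norm_restrict_sq hx _
    _ = D * E ^ 2 := mul_comm _ _

lemma norm_res_succ_sq_le_sub (hΦ : HasRIP Φ L δ) (hL : #(suppF x) + k < L)
    (hε : 0 ≤ ε) (hδε : 2 * δ + ε ≤ 1) (ha : 0 ≤ a) (hx : ∀ i ∈ suppF x, a ≤ |x i|) (hk : k < N)
    (hne : restrict x (run.sets k)ᶜ ≠ 0) (hv : ‖v‖ ≤ ε * ‖restrict x (run.sets k)ᶜ‖) :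
    ‖run.res (k + 1)‖ ^ 2 ≤ ‖run.res k‖ ^ 2 - (1 - 5 * δ - 2 * ε) * a ^ 2 := by
  have hδ : 0 ≤ δ := hΦ.1
  set D := inner ℝ (col Φ (run.idx (k + 1))) (run.res k)
  have hD : (1 - 2 * δ - ε) * a ≤ |D| :=
    run.mul_le_abs_inner_col_idx_res hΦ hL.le hε (by linarith) ha hx hk hne hv
  have hdrop : (1 - 5 * δ - 2 * ε) * a ^ 2 ≤ D ^ 2 / (1 + δ) := by
    rw [le_div_iff₀ (by positivity)]
    calc (1 - 5 * δ - 2 * ε) * a ^ 2 * (1 + δ)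
        = (1 - 5 * δ - 2 * ε) * (1 + δ) * a ^ 2 := by ring
      _ ≤ (1 - 2 * δ - ε) ^ 2 * a ^ 2 := by
          gcongr
          nlinarith [mul_nonneg hδ hε]
      _ = ((1 - 2 * δ - ε) * a) ^ 2 := (mul_pow _ _ _).symm
      _ ≤ |D| ^ 2 := pow_le_pow_left₀ (mul_nonneg (by linarith) ha) hD 2
      _ = D ^ 2 := sq_abs D
  linarith [run.norm_res_succ_sq_le hk (hΦ.norm_col_sq_le (by omega))]

lemma sq_mul_norm_restrict_compl_le (hΦ : HasRIP Φ L δ) (hL : #(suppF x) + N ≤ L)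
    (hε : 0 ≤ ε) (hδε : 2 * δ + ε ≤ 1) (ha : 0 ≤ a) (hx : ∀ i ∈ suppF x, a ≤ |x i|)
    (hne : restrict x (run.sets N)ᶜ ≠ 0) (hv : ‖v‖ ≤ ε * ‖restrict x (run.sets N)ᶜ‖) :
    ((1 - δ - ε) * ‖restrict x (run.sets N)ᶜ‖) ^ 2 ≤
      ((1 + δ + ε) * ‖x‖) ^ 2 - N * ((1 - 5 * δ - 2 * ε) * a ^ 2) := by
  have hδ : 0 ≤ δ := hΦ.1
  have hstep : ∀ k < N, ‖run.res (k + 1)‖ ^ 2 ≤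
      ‖run.res k‖ ^ 2 - (1 - 5 * δ - 2 * ε) * a ^ 2 := by
    intro k hk
    have hanti := run.norm_restrict_compl_antitone hk.le le_rfl x
    exact run.norm_res_succ_sq_le_sub hΦ (by omega) hε hδε ha hx hk
      (norm_pos_iff.1 ((norm_pos_iff.2 hne).trans_le hanti)) (hv.trans (by gcongr))
  have hinit : ‖mulVec' Φ x + v‖ ≤ (1 + δ + ε) * ‖x‖ :=
    calc ‖mulVec' Φ x + v‖ ≤ ‖mulVec' Φ x‖ + ‖v‖ := norm_add_le _ _
      _ ≤ (1 + δ) * ‖x‖ + ε * ‖x‖ := by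
          gcongr
          · exact hΦ.norm_mulVec'_le (by omega)
          · exact hv.trans (by gcongr; exact norm_restrict_le_norm _ _)
      _ = (1 + δ + ε) * ‖x‖ := by ring
  calc ((1 - δ - ε) * ‖restrict x (run.sets N)ᶜ‖) ^ 2 ≤ ‖run.res N‖ ^ 2 :=
        pow_le_pow_left₀ (mul_nonneg (by linarith) (norm_nonneg _))
          (run.mul_norm_restrict_compl_le_norm_res hΦ hL (by linarith) le_rfl hv) 2
    _ ≤ ‖mulVec' Φ x + v‖ ^ 2 - N * ((1 - 5 * δ - 2 * ε) * a ^ 2) :=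
        run.norm_res_sq_le_sub_mul hstep le_rfl
    _ ≤ _ := by gcongr

end Recovery

section EqualMagnitude

variable {m n K : ℕ} {Φ : Matrix (Fin m) (Fin n) ℝ} {x : Vec n} {v : Vec m} {δ ε a s : ℝ}
  (run : OMPRun Φ (mulVec' Φ x + v) K)

lemma norm_restrict_compl_sq_le_of_norm_noise_le (hK : #(suppF x) = K) (hΦ : HasRIP Φ (2 * K) δ)
    (hε : 0 ≤ ε) (hδε : 2 * δ + ε ≤ 1 / 2) (ha : 0 ≤ a) (hx : ∀ i ∈ suppF x, |x i| = a)
    (hv : ‖v‖ ≤ ε * ‖restrict x (run.sets K)ᶜ‖) :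
    ‖restrict x (run.sets K)ᶜ‖ ^ 2 ≤ (30 * δ + 18 * ε) * ‖x‖ ^ 2 := by
  have hδ : 0 ≤ δ := hΦ.1
  by_cases hne : restrict x (run.sets K)ᶜ = 0
  · calc ‖restrict x (run.sets K)ᶜ‖ ^ 2 = 0 := by simp [hne]
      _ ≤ (30 * δ + 18 * ε) * ‖x‖ ^ 2 := by positivity
  have hxK : ‖x‖ ^ 2 = a ^ 2 * K := hK ▸ norm_sq_eq_of_abs_eq hx
  set E := ‖restrict x (run.sets K)ᶜ‖
  have hmain : ((1 - δ - ε) * E) ^ 2 ≤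
      ((1 + δ + ε) * ‖x‖) ^ 2 - K * ((1 - 5 * δ - 2 * ε) * a ^ 2) :=
    run.sq_mul_norm_restrict_compl_le hΦ (by omega) hε (by linarith) ha
      (fun i hi ↦ (hx i hi).ge) hne hv
  have hlower : (1 / 2 * E) ^ 2 ≤ ((1 - δ - ε) * E) ^ 2 := by
    gcongr
    linarith
  have hcoeff : (1 + δ + ε) ^ 2 - (1 - 5 * δ - 2 * ε) ≤ (30 * δ + 18 * ε) / 4 := by
    nlinarith
  have hupper : ((1 + δ + ε) * ‖x‖) ^ 2 - K * ((1 - 5 * δ - 2 * ε) * a ^ 2) ≤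
      (30 * δ + 18 * ε) / 4 * ‖x‖ ^ 2 :=
    calc ((1 + δ + ε) * ‖x‖) ^ 2 - K * ((1 - 5 * δ - 2 * ε) * a ^ 2)
        = (1 + δ + ε) ^ 2 * ‖x‖ ^ 2 - (1 - 5 * δ - 2 * ε) * (a ^ 2 * K) := by ring
      _ = ((1 + δ + ε) ^ 2 - (1 - 5 * δ - 2 * ε)) * ‖x‖ ^ 2 := by rw [hxK]; ring
      _ ≤ (30 * δ + 18 * ε) / 4 * ‖x‖ ^ 2 := by gcongr
  linarith

lemma norm_restrict_compl_sq_le_of_norm_noise_sq_le (hK : #(suppF x) = K) (hs : 0 ≤ s)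
    (hΦ : HasRIP Φ (2 * K) (s ^ 2)) (ha : 0 ≤ a) (hx : ∀ i ∈ suppF x, |x i| = a)
    (hv : ‖v‖ ^ 2 ≤ s ^ 3 * ‖mulVec' Φ x‖ ^ 2) :
    ‖restrict x (run.sets K)ᶜ‖ ^ 2 ≤ 30 * s * ‖x‖ ^ 2 := by
  set E := ‖restrict x (run.sets K)ᶜ‖
  have hEx : E ^ 2 ≤ ‖x‖ ^ 2 := by
    gcongr
    exact norm_restrict_le_norm _ _
  rcases lt_or_ge (1 / 4) s with hlarge | hs1
  · nlinarith [sq_nonneg ‖x‖]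
  rcases lt_or_ge (E ^ 2) (s * ‖x‖ ^ 2) with hsmall | hE
  · nlinarith [mul_nonneg hs (sq_nonneg ‖x‖)]
  have hnoise : ‖v‖ ≤ 5 / 4 * s * E := by
    refine pow_le_pow_iff_left₀ (norm_nonneg _) (by positivity) two_ne_zero |>.1 ?_
    calc ‖v‖ ^ 2 ≤ s ^ 3 * ((1 + s ^ 2) * ‖x‖ ^ 2) :=
          hv.trans (by gcongr; exact (hΦ.2 x (by omega)).2)
      _ = s ^ 2 * (1 + s ^ 2) * (s * ‖x‖ ^ 2) := by ring
      _ ≤ s ^ 2 * (5 / 4) ^ 2 * E ^ 2 := by gcongr; nlinarith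
      _ = (5 / 4 * s * E) ^ 2 := by ring
  calc E ^ 2 ≤ (30 * s ^ 2 + 18 * (5 / 4 * s)) * ‖x‖ ^ 2 :=
        run.norm_restrict_compl_sq_le_of_norm_noise_le hK hΦ (by positivity) (by nlinarith) ha
          hx hnoise
    _ ≤ 30 * s * ‖x‖ ^ 2 := by gcongr; nlinarith

end EqualMagnitude

end OMPRun

lemma norm_sq_le_rpow_mul_of_SNR_ge {m n : ℕ} {Φ : Matrix (Fin m) (Fin n) ℝ} {x : Vec n}
    {v : Vec m} {δ p : ℝ} (hδ : 0 < δ) (h : SNR Φ x v ≥ δ ^ (-p)) :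
    ‖v‖ ^ 2 ≤ δ ^ p * ‖mulVec' Φ x‖ ^ 2 := by
  have hmul : δ ^ (-p) * ‖v‖ ^ 2 ≤ ‖mulVec' Φ x‖ ^ 2 :=
    mul_le_of_le_div₀ (sq_nonneg _) (sq_nonneg _) h
  rwa [Real.rpow_neg hδ.le, inv_mul_le_iff₀ (Real.rpow_pos_of_pos hδ p)] at hmul

theorem stmt4_general {m n K : ℕ} {Φ : Matrix (Fin m) (Fin n) ℝ} {δ : ℝ} {x : Vec n} {v : Vec m}
    (hK : #(suppF x) = K) (hx : ∀ i ∈ suppF x, ∀ j ∈ suppF x, |x i| = |x j|)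
    (hΦ : HasRIP Φ (2 * K) δ) (hv : ‖v‖ ^ 2 ≤ δ ^ ((3 : ℝ) / 2) * ‖mulVec' Φ x‖ ^ 2)
    (run : OMPRun Φ (mulVec' Φ x + v) K) :
    (#(run.sets K \ suppF x) : ℝ) ≤ 30 * δ ^ ((1 : ℝ) / 2) * K := by
  have hsym : #(run.sets K \ suppF x) = #(suppF x \ run.sets K) :=
    card_sdiff_comm (by rw [run.card_sets le_rfl, hK])
  rw [Real.rpow_div_two_eq_sqrt _ hΦ.1] at hv ⊢
  rw [Real.rpow_one, hsym]
  rcases (suppF x).eq_empty_or_nonempty with hempty | ⟨i₀, hi₀⟩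
  · rw [hempty, empty_sdiff, card_empty, Nat.cast_zero]
    positivity
  have ha : 0 < |x i₀| := abs_pos.2 (mem_suppF.1 hi₀)
  have hxa : ∀ i ∈ suppF x, |x i| = |x i₀| := fun i hi ↦ hx i hi i₀ hi₀
  have henergy : ‖restrict x (run.sets K)ᶜ‖ ^ 2 ≤ 30 * √δ * ‖x‖ ^ 2 :=
    run.norm_restrict_compl_sq_le_of_norm_noise_sq_le hK (Real.sqrt_nonneg δ)
      (by rwa [Real.sq_sqrt hΦ.1]) ha.le hxa (mod_cast hv)
  rw [norm_restrict_compl_sq_eq_of_abs_eq hxa, norm_sq_eq_of_abs_eq hxa, hK] at henergy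
  exact le_of_mul_le_mul_left (by linarith) (pow_pos ha 2)

/-- approximate support recovery for signals with nonzero entries
of equal magnitude: if `SNR ≥ δ^{-3/2}` then the error rate is `≤ C δ^{1/2}`. -/
theorem stmt4 : ∃ C : ℝ, 0 < C ∧
    ∀ (m n K : ℕ) (Φ : Matrix (Fin m) (Fin n) ℝ) (δ : ℝ) (x : Vec n) (v y : Vec m)
      (T : Finset (Fin n)),
      suppF x = T → T.card = K → 1 ≤ K →
      (∀ i ∈ T, ∀ j ∈ T, |x i| = |x j|) →
      RIPConst Φ (2 * K) δ → 0 < δ → δ < 1 →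
      v ≠ 0 → y = mulVec' Φ x + v →
      SNR Φ x v ≥ δ ^ (-(3 : ℝ) / 2) →
      ∀ run : OMPRun Φ y K,
        ((run.sets K \ T).card : ℝ) / K ≤ C * δ ^ ((1 : ℝ) / 2) := by
  refine ⟨30, by norm_num, ?_⟩
  rintro m n K Φ δ x v _ _ rfl hK hK1 hx hΦ hδ - - rfl hsnr run
  rw [div_le_iff₀ (mod_cast hK1)]
  exact stmt4_general hK hx hΦ.1 (norm_sq_le_rpow_mul_of_SNR_ge hδ (by rwa [← neg_div])) run

end
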